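/- Soundness of limited belief with respect to classical semantics: for every set of clauses s, every objective formula α, and every natural number k, if s ⊨ˢ B_k α then s ⊨ α (classical entailment). -/

import Mathlib

/-! ## Limited belief: basic syntax and semantics (Schwering 2017, quantifier-free). -/

/-- Standard names (a countably infinite supply). -/
abbrev Name := ℕ

/-- Function terms `f(n₁,…,n_j)`: a function symbol applied to standard names. -/
structure FnTerm where
  sym : ℕ
  args : List Name
deriving DecidableEq, Inhabited

/-- Literals `t ≈ n` (pos) and `t ≉ n` (neg). -/
inductive Lit where
  | pos (t : FnTerm) (n : Name)
  | neg (t : FnTerm) (n : Name)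
deriving DecidableEq

instance : Inhabited Lit := ⟨.pos default 0⟩

/-- The left-hand side (function term) of a literal. -/
def Lit.lhs : Lit → FnTerm
  | .pos t _ => t
  | .neg t _ => t

/-- The right-hand side (standard name) of a literal. -/
def Lit.rhs : Lit → Name
  | .pos _ n => n
  | .neg _ n => n

/-- The negation `¬ℓ` of a literal. -/
def Lit.negate : Lit → Lit
  | .pos t n => .neg t n
  | .neg t n => .pos t n

/-- Names occurring in a literal. -/
def Lit.names (ℓ : Lit) : Finset Name := insert ℓ.rhs ℓ.lhs.args.toFinset

/-- Two literals are complementary iff they are of the form `t ≈ n` and `t ≉ n`,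
or of the form `t ≈ n` and `t ≈ n'` for distinct `n, n'`. -/
def Lit.complementary : Lit → Lit → Bool
  | .pos t n, .neg t' n' => t == t' && n == n'
  | .neg t n, .pos t' n' => t == t' && n == n'
  | .pos t n, .pos t' n' => t == t' && n != n'
  | .neg _ _, .neg _ _ => false

/-- A clause is a (finite) set of literals. -/
abbrev Clause := Finset Lit

/-- Unit propagation of clause `c` with literal `ℓ`: remove from `c` all
literals complementary to `ℓ`. -/
def Clause.prop (c : Clause) (ℓ : Lit) : Clause :=
  c.filter (fun ℓ' => Lit.complementary ℓ' ℓ = false)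

/-- `c₁` subsumes `c₂` iff for every `t ≈ n ∈ c₁`, `t ≈ n ∈ c₂` or `t ≉ n' ∈ c₂`
for some `n' ≠ n`, and for every `t ≉ n ∈ c₁`, `t ≉ n ∈ c₂`. -/
def Clause.subsumes (c₁ c₂ : Clause) : Prop :=
  (∀ t n, Lit.pos t n ∈ c₁ → Lit.pos t n ∈ c₂ ∨ ∃ n', n' ≠ n ∧ Lit.neg t n' ∈ c₂) ∧
  (∀ t n, Lit.neg t n ∈ c₁ → Lit.neg t n ∈ c₂)

/-- `UP s`: the closure of the set of clauses `s` under unit propagation and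
subsumption.  `UP s c` means `c ∈ UP(s)`. -/
inductive UP (s : Set Clause) : Clause → Prop
  | mem {c : Clause} : c ∈ s → UP s c
  | unit {c : Clause} {ℓ : Lit} : UP s {ℓ} → UP s c → UP s (c.prop ℓ)
  | sub {c₁ c₂ : Clause} : UP s c₁ → c₁.subsumes c₂ → UP s c₂

/-- Objective formulas: literals (`atom` is `t ≈ n`, `not atom` is `t ≉ n`),
negation and disjunction. -/
inductive Form where
  | atom (t : FnTerm) (n : Name)
  | not (φ : Form)
  | or (φ ψ : Form)
deriving DecidableEq

/-- `α ∧ β` abbreviates `¬(¬α ∨ ¬β)`. -/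
def Form.and (φ ψ : Form) : Form := .not (.or (.not φ) (.not ψ))

/-- `α → β` abbreviates `¬α ∨ β`. -/
def Form.imp (φ ψ : Form) : Form := .or (.not φ) ψ

/-- A formula is (syntactically) a clause iff it is a disjunction of literals. -/
def Form.isClause : Form → Bool
  | .atom _ _ => true
  | .not (.atom _ _) => true
  | .not _ => false
  | .or φ ψ => φ.isClause && ψ.isClause

/-- The set of literals of a clause-formula. -/
def Form.lits : Form → Clause
  | .atom t n => {Lit.pos t n}
  | .not (.atom t n) => {Lit.neg t n}
  | .not _ => ∅
  | .or φ ψ => φ.lits ∪ ψ.lits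

/-- The limited-belief truth relation `s ⊨ˢ α` for objective formulas:
a clause is true iff it is in `UP(s)`; a non-clause disjunction is true iff one
of its disjuncts is; `¬(α ∨ β)` is true iff `¬α` and `¬β` are; `¬¬α` is true
iff `α` is. -/
def sat (s : Set Clause) : Form → Prop
  | .atom t n => UP s {Lit.pos t n}
  | .not (.atom t n) => UP s {Lit.neg t n}
  | .not (.not φ) => sat s φ
  | .not (.or φ ψ) => sat s (.not φ) ∧ sat s (.not ψ)
  | .or φ ψ => if (Form.or φ ψ).isClause then UP s (Form.or φ ψ).lits
               else sat s φ ∨ sat s ψ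

/-- `satB s k α` is `s ⊨ˢ B_k α`: `B₀ α` holds iff `α` does, and `B_{k+1} α`
holds iff for some function term `t`, for all names `n`,
`s ∪ {t ≈ n} ⊨ˢ B_k α`. -/
def satB (s : Set Clause) : ℕ → Form → Prop
  | 0, φ => sat s φ
  | k+1, φ => ∃ t : FnTerm, ∀ n : Name, satB (s ∪ {({Lit.pos t n} : Clause)}) k φ

/-- A world maps function terms to standard names. -/
abbrev World := FnTerm → Name

/-- Classical truth of a literal in a world. -/
def Lit.holds (w : World) : Lit → Prop
  | .pos t n => w t = n
  | .neg t n => w t ≠ n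

/-- Classical truth of a clause in a world. -/
def Clause.holds (w : World) (c : Clause) : Prop := ∃ ℓ ∈ c, ℓ.holds w

/-- Classical truth of an objective formula in a world. -/
def wsat (w : World) : Form → Prop
  | .atom t n => w t = n
  | .not φ => ¬ wsat w φ
  | .or φ ψ => wsat w φ ∨ wsat w ψ

/-- Classical entailment `s ⊨ α`. -/
def entails (s : Set Clause) (φ : Form) : Prop :=
  ∀ w : World, (∀ c ∈ s, c.holds w) → wsat w φ

/-- Classical entailment of a clause (disjunction of its literals). -/
def entailsClause (s : Set Clause) (c : Clause) : Prop :=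
  ∀ w : World, (∀ c' ∈ s, c'.holds w) → c.holds w

/-- Function terms mentioned in a formula. -/
def Form.terms : Form → Finset FnTerm
  | .atom t _ => {t}
  | .not φ => φ.terms
  | .or φ ψ => φ.terms ∪ ψ.terms

/-- Standard names mentioned in a formula. -/
def Form.names : Form → Finset Name
  | .atom t n => insert n t.args.toFinset
  | .not φ => φ.names
  | .or φ ψ => φ.names ∪ ψ.names

theorem Lit.complementary_not_both {w : World} {a b : Lit}
    (ha : a.holds w) (hb : b.holds w) : Lit.complementary a b = false := by
  cases a <;> cases b <;> simp only [Lit.holds, Lit.complementary] at * <;> grind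

theorem UP.sound {s : Set Clause} {w : World} (hw : ∀ c ∈ s, Clause.holds w c)
    {c : Clause} (h : UP s c) : Clause.holds w c := by
  induction h with
  | mem hc => exact hw _ hc
  | unit _ _ ih1 ih2 =>
    obtain ⟨l, hl, hlw⟩ := ih1
    rw [Finset.mem_singleton] at hl
    subst hl
    obtain ⟨m, hm, hmw⟩ := ih2
    exact ⟨m, Finset.mem_filter.2 ⟨hm, Lit.complementary_not_both hmw hlw⟩, hmw⟩
  | sub _ hs ih =>
    obtain ⟨l, hl, hlw⟩ := ih
    cases l with
    | pos t n =>
      rcases hs.1 t n hl with h | ⟨n', hn, h⟩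
      · exact ⟨_, h, hlw⟩
      · refine ⟨_, h, ?_⟩
        simp only [Lit.holds] at *
        grind
    | neg t n => exact ⟨_, hs.2 t n hl, hlw⟩

theorem Form.lits_sound {w : World} (φ : Form) (h : Clause.holds w φ.lits) : wsat w φ := by
  induction φ with
  | atom t n =>
    obtain ⟨l, hl, hlw⟩ := h
    simp only [Form.lits, Finset.mem_singleton] at hl
    subst hl
    exact hlw
  | not φ _ =>
    obtain ⟨l, hl, hlw⟩ := h
    cases φ with
    | atom t n =>
      simp only [Form.lits, Finset.mem_singleton] at hl
      subst hl
      exact hlw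
    | not φ => simp [Form.lits] at hl
    | or φ ψ => simp [Form.lits] at hl
  | or φ ψ ih1 ih2 =>
    obtain ⟨l, hl, hlw⟩ := h
    simp only [Form.lits, Finset.mem_union] at hl
    rcases hl with hl | hl
    · exact Or.inl (ih1 ⟨l, hl, hlw⟩)
    · exact Or.inr (ih2 ⟨l, hl, hlw⟩)

theorem sat_sound {s : Set Clause} {w : World} (hw : ∀ c ∈ s, Clause.holds w c)
    (φ : Form) : (sat s φ → wsat w φ) ∧ (sat s (.not φ) → ¬ wsat w φ) := by
  induction φ with
  | atom t n =>
    constructor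
    · intro h
      rw [sat] at h
      exact Form.lits_sound (.atom t n) (UP.sound hw h)
    · intro h
      rw [sat] at h
      exact Form.lits_sound (.not (.atom t n)) (UP.sound hw h)
  | not φ ih =>
    refine ⟨ih.2, fun h => ?_⟩
    rw [sat] at h
    exact not_not.2 (ih.1 h)
  | or φ ψ ih1 ih2 =>
    constructor
    · intro h
      rw [sat] at h
      split_ifs at h
      · exact Form.lits_sound _ (UP.sound hw h)
      · exact h.imp ih1.1 ih2.1
    · intro h
      rw [sat] at h
      exact not_or.2 ⟨ih1.2 h.1, ih2.2 h.2⟩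

/-- **Soundness of limited belief** w.r.t. classical semantics: if
`s ⊨ˢ B_k α` then `s ⊨ α`. -/
theorem limited_belief_sound (s : Set Clause) (α : Form) (k : ℕ)
    (h : satB s k α) : entails s α := by
  intro w hw
  induction k generalizing s with
  | zero => exact (sat_sound hw α).1 h
  | succ k ih =>
    obtain ⟨t, ht⟩ := h
    refine ih _ (ht (w t)) ?_
    rintro c (hc | hc)
    · exact hw c hc
    · rw [Set.mem_singleton_iff] at hc
      subst hc
      exact ⟨_, Finset.mem_singleton_self _, rfl⟩
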